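/- Let (M,E,V) be a path geometry and α₀ ∈ Γ(H*) a smooth section, where H = E ⊕ V. Then there is a unique one-form α ∈ Ω¹(M) such that α|_H = α₀ and dα(ξ,η) = 0 for all ξ ∈ Γ(E) and η ∈ Γ(V). Moreover, the map L : Γ(H*) → Ω¹(M) sending α₀ to this α is a linear first order differential operator. -/

import Mathlib

/-!
The conditions on `α` say exactly that `α = α₀` on `H` and
`α [ξ, η] = ξ · α₀(η) − η · α₀(ξ)` for `ξ ∈ E`, `η ∈ V`; call the right-hand side `F(ξ, η)`.
Uniqueness holds because the difference of two solutions descends to `Q = TM/H`, and vanishes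
on the brackets `q [ξ, η]`, which generate `Q` as the Levi bracket is surjective.

Existence needs that these prescriptions are compatible; no splitting of `TM → Q` is used.
Let `K ⊂ TM × C` be the graph of `α₀`. Modulo `K`, the map `(ξ, η) ↦ ([ξ, η], F(ξ, η))` is
`C`-bilinear, since its failure to be tensorial consists of multiples of `(ξ, α₀ ξ)` and
`(η, α₀ η)`. Hence it induces a linear map `E ⊗ V → (TM × C)/K`, and, through the inverse of the
Levi isomorphism, a linear map `σ : TM → (TM × C)/K` lying over the projection `TM → TM/H`.
It follows that `σ x` is the class of `(x, c)` for exactly one `c`; this `c` is `α x`.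

Linearity of `L` follows from uniqueness, the two conditions being `ℝ`-linear in the pair
`(α₀, α)`.
-/

/-!
An algebraic model of the smooth calculus on a smooth manifold `M`:
`C` plays the role of the algebra `C^∞(M,ℝ)` of smooth functions and `X` plays the
role of the `C^∞(M,ℝ)`-module `𝔛(M)` of smooth vector fields, together with the Lie
bracket of vector fields and the derivative of functions along vector fields
(i.e. a Lie–Rinehart algebra over `ℝ`).  Distributions (smooth subbundles of `TM`)
are modelled as `C`-submodules of `X`, linear connections on `TM` as operators
`X → X → X` with the usual tensoriality and Leibniz properties, and one-forms as
`C`-linear maps `X →ₗ[C] C`.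
-/

open scoped TensorProduct

/-- The algebra of smooth functions together with the module of smooth vector
fields on a smooth manifold, with the Lie bracket and directional derivative. -/
structure VFCalc where
  /-- the smooth functions `C^∞(M,ℝ)` -/
  C : Type
  /-- the smooth vector fields `𝔛(M)` -/
  X : Type
  [ringC : CommRing C]
  [algC : Algebra ℝ C]
  [grpX : AddCommGroup X]
  [modX : Module C X]
  /-- the Lie bracket of vector fields -/
  lie : X → X → X
  /-- the derivative `D ψ f = ψ · f` of a function along a vector field -/
  D : X → C → C
  lie_add_left : ∀ ψ₁ ψ₂ φ, lie (ψ₁ + ψ₂) φ = lie ψ₁ φ + lie ψ₂ φ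
  lie_skew : ∀ ψ φ, lie φ ψ = - lie ψ φ
  jacobi : ∀ ψ₁ ψ₂ ψ₃, lie ψ₁ (lie ψ₂ ψ₃) = lie (lie ψ₁ ψ₂) ψ₃ + lie ψ₂ (lie ψ₁ ψ₃)
  lie_smul_right : ∀ (f : C) (ψ φ : X), lie ψ (f • φ) = f • lie ψ φ + (D ψ f) • φ
  D_add_left : ∀ ψ₁ ψ₂ f, D (ψ₁ + ψ₂) f = D ψ₁ f + D ψ₂ f
  D_smul_left : ∀ (g : C) ψ f, D (g • ψ) f = g * D ψ f
  D_add_right : ∀ ψ f₁ f₂, D ψ (f₁ + f₂) = D ψ f₁ + D ψ f₂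
  D_mul_right : ∀ ψ f₁ f₂, D ψ (f₁ * f₂) = f₁ * D ψ f₂ + f₂ * D ψ f₁
  D_algebraMap : ∀ ψ r, D ψ (algebraMap ℝ C r) = 0

attribute [instance] VFCalc.ringC VFCalc.algC VFCalc.grpX VFCalc.modX

/-- the exterior derivative of a one-form, `dα(ψ,φ) = ψ·α(φ) − φ·α(ψ) − α([ψ,φ])` -/
def VFCalc.dform (P : VFCalc) (α : P.X →ₗ[P.C] P.C) (ψ φ : P.X) : P.C :=
  P.D ψ (α φ) - P.D φ (α ψ) - α (P.lie ψ φ)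

/-- A (generalized) path geometry on a manifold `M` of dimension `2n+1`:
distributions `E, V ⊂ TM` (of rank `1` and `n`) with `E ∩ V = 0`, `V` involutive,
such that the Levi bracket induces an isomorphism `E ⊗ V ≅ Q := TM/(E ⊕ V)`. -/
structure PathGeometry extends VFCalc where
  /-- the rank one distribution `E` -/
  E : Submodule C X
  /-- the rank `n` distribution `V` -/
  V : Submodule C X
  inf_bot : E ⊓ V = ⊥
  involutive : ∀ η₁ ∈ V, ∀ η₂ ∈ V, lie η₁ η₂ ∈ V
  /-- the Levi bracket `E ⊗ V → Q = TM/(E ⊔ V)` is an isomorphism of bundles -/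
  leviIso : (↥E ⊗[C] ↥V) ≃ₗ[C] (X ⧸ (E ⊔ V))
  leviIso_apply : ∀ (ξ : ↥E) (η : ↥V),
    leviIso (ξ ⊗ₜ[C] η) = Submodule.Quotient.mk (lie (ξ : X) (η : X))

namespace PathGeometry

variable (P : PathGeometry)

/-- the corank one distribution `H = E ⊕ V` -/
def H : Submodule P.C P.X := P.E ⊔ P.V

/-- the quotient bundle `Q = TM/H` -/
abbrev Q := P.X ⧸ P.H

/-- the quotient projection `q : TM → Q` -/
def q : P.X →ₗ[P.C] P.Q := P.H.mkQ

/-- the Levi bracket `𝓛(ψ,φ) = q([ψ,φ])` -/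
def levi (ψ φ : P.X) : P.Q := P.q (P.lie ψ φ)

/-- the constant function `½` -/
noncomputable def half : P.C := algebraMap ℝ P.C (1/2)

/-- A (local) scale: a nowhere vanishing smooth section `ξ₀` of the line bundle `E`,
i.e. a trivialization of `E`, modelled as a basis of `E` as free rank one module. -/
structure IsScale (ξ₀ : P.X) : Prop where
  mem : ξ₀ ∈ P.E
  span : ∀ ξ ∈ P.E, ∃ f : P.C, ξ = f • ξ₀
  basis : ∀ f : P.C, f • ξ₀ = 0 → f = 0

end PathGeometry

/-- A linear connection on `TM`. -/
structure Conn (P : VFCalc) where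
  /-- the covariant derivative `cov ψ φ = ∇_ψ φ` -/
  cov : P.X → P.X → P.X
  add_left : ∀ ψ₁ ψ₂ φ, cov (ψ₁ + ψ₂) φ = cov ψ₁ φ + cov ψ₂ φ
  smul_left : ∀ (f : P.C) ψ φ, cov (f • ψ) φ = f • cov ψ φ
  add_right : ∀ ψ φ₁ φ₂, cov ψ (φ₁ + φ₂) = cov ψ φ₁ + cov ψ φ₂
  leibniz : ∀ (f : P.C) ψ φ, cov ψ (f • φ) = f • cov ψ φ + (P.D ψ f) • φ

namespace Conn

variable {P : VFCalc} (cn : Conn P)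

/-- the torsion `τ(ψ₁,ψ₂) = ∇_{ψ₁}ψ₂ − ∇_{ψ₂}ψ₁ − [ψ₁,ψ₂]` -/
def torsion (ψ₁ ψ₂ : P.X) : P.X := cn.cov ψ₁ ψ₂ - cn.cov ψ₂ ψ₁ - P.lie ψ₁ ψ₂

/-- the curvature `R(ψ₁,ψ₂)(ψ₃) = ∇_{ψ₁}∇_{ψ₂}ψ₃ − ∇_{ψ₂}∇_{ψ₁}ψ₃ − ∇_{[ψ₁,ψ₂]}ψ₃` -/
def curv (ψ₁ ψ₂ ψ₃ : P.X) : P.X :=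
  cn.cov ψ₁ (cn.cov ψ₂ ψ₃) - cn.cov ψ₂ (cn.cov ψ₁ ψ₃) - cn.cov (P.lie ψ₁ ψ₂) ψ₃

end Conn

/-- The Weyl structure associated to a scale `ξ₀`: a linear connection `∇` on `TM`
together with a decomposition `TM = E ⊕ V ⊕ ι(Q)` (encoded by the splitting
`ι : Q → TM` of `q`) such that `E`, `V`, `ι(Q)` are parallel, `∇ξ₀ = 0`,
`ι ∘ 𝓛 : E ⊗ V → ι(Q)` is parallel, the torsion satisfies `τ(E,V) ⊂ ι(Q)`,
`τ(H,ι(Q)) ⊂ H` and the normalization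
`𝓛(τ(ξ₀,ζ₁),η₂) = 2𝓛(ξ₀,τ(η₁,ζ₂))` for `ζᵢ = ι(𝓛(ξ₀,ηᵢ))`. -/
structure WeylStructure (P : PathGeometry) (ξ₀ : P.X) where
  conn : Conn P.toVFCalc
  ι : P.Q →ₗ[P.C] P.X
  q_ι : ∀ w, P.q (ι w) = w
  parE : ∀ ψ : P.X, ∀ ξ ∈ P.E, conn.cov ψ ξ ∈ P.E
  parV : ∀ ψ : P.X, ∀ η ∈ P.V, conn.cov ψ η ∈ P.V
  parQ : ∀ (ψ : P.X) (w : P.Q), conn.cov ψ (ι w) ∈ LinearMap.range ι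
  parScale : ∀ ψ : P.X, conn.cov ψ ξ₀ = 0
  parLevi : ∀ ψ : P.X, ∀ ξ ∈ P.E, ∀ η ∈ P.V,
    conn.cov ψ (ι (P.levi ξ η)) = ι (P.levi (conn.cov ψ ξ) η) + ι (P.levi ξ (conn.cov ψ η))
  torsEV : ∀ ξ ∈ P.E, ∀ η ∈ P.V, conn.torsion ξ η ∈ LinearMap.range ι
  torsHQ : ∀ ψ ∈ P.H, ∀ w : P.Q, conn.torsion ψ (ι w) ∈ P.H
  norm : ∀ η₁ ∈ P.V, ∀ η₂ ∈ P.V,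
    P.levi (conn.torsion ξ₀ (ι (P.levi ξ₀ η₁))) η₂
      = (2 : P.C) • P.levi ξ₀ (conn.torsion η₁ (ι (P.levi ξ₀ η₂)))

namespace VFCalc

variable (P : VFCalc)

lemma lie_add_right (ψ φ₁ φ₂ : P.X) : P.lie ψ (φ₁ + φ₂) = P.lie ψ φ₁ + P.lie ψ φ₂ := by
  rw [P.lie_skew _ ψ, P.lie_add_left, P.lie_skew ψ φ₁, P.lie_skew ψ φ₂, neg_add, neg_neg, neg_neg]

lemma lie_smul_left (f : P.C) (ψ φ : P.X) :
    P.lie (f • ψ) φ = f • P.lie ψ φ - P.D φ f • ψ := by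
  rw [P.lie_skew φ (f • ψ), P.lie_smul_right, P.lie_skew ψ φ]
  module

lemma dform_add (α β : P.X →ₗ[P.C] P.C) (ψ φ : P.X) :
    P.dform (α + β) ψ φ = P.dform α ψ φ + P.dform β ψ φ := by
  simp only [dform, LinearMap.add_apply, P.D_add_right]
  ring

/-- The exterior derivative is linear over the constants. -/
lemma dform_algebraMap_smul (r : ℝ) (α : P.X →ₗ[P.C] P.C) (ψ φ : P.X) :
    P.dform (algebraMap ℝ P.C r • α) ψ φ = algebraMap ℝ P.C r * P.dform α ψ φ := by
  simp only [dform, LinearMap.smul_apply, smul_eq_mul, P.D_mul_right, P.D_algebraMap]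
  ring

end VFCalc

namespace PathGeometry

variable (P : PathGeometry)

/-- `α` restricts to `α₀` on `H`, and `dα` vanishes on `E × V`. -/
def IsExt (α₀ : ↥P.H →ₗ[P.C] P.C) (α : P.X →ₗ[P.C] P.C) : Prop :=
  (∀ ψ : ↥P.H, α (ψ : P.X) = α₀ ψ) ∧ (∀ ξ ∈ P.E, ∀ η ∈ P.V, P.dform α ξ η = 0)

lemma E_le_H : P.E ≤ P.H := le_sup_left

lemma V_le_H : P.V ≤ P.H := le_sup_right

/-- The Levi isomorphism, with target written as `Q`. -/
def leviEquiv : (↥P.E ⊗[P.C] ↥P.V) ≃ₗ[P.C] P.Q := P.leviIso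

lemma leviEquiv_tmul (ξ : ↥P.E) (η : ↥P.V) :
    P.leviEquiv (ξ ⊗ₜ[P.C] η) = P.H.mkQ (P.lie (ξ : P.X) (η : P.X)) :=
  P.leviIso_apply ξ η

/-- Brackets `[ξ, η]` and `H` together generate `TM`. -/
lemma eq_zero_of_vanish (γ : P.X →ₗ[P.C] P.C) (hH : ∀ x ∈ P.H, γ x = 0)
    (hb : ∀ ξ ∈ P.E, ∀ η ∈ P.V, γ (P.lie ξ η) = 0) : γ = 0 := by
  have hcomp : (P.H.liftQ γ hH) ∘ₗ P.leviEquiv.toLinearMap = 0 := by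
    apply TensorProduct.ext'
    intro ξ η
    rw [LinearMap.comp_apply, LinearEquiv.coe_coe, leviEquiv_tmul]
    exact hb ξ ξ.2 η η.2
  ext x
  have h := LinearMap.congr_fun hcomp (P.leviEquiv.symm (P.H.mkQ x))
  rw [LinearMap.comp_apply, LinearEquiv.coe_coe, LinearEquiv.apply_symm_apply] at h
  exact h

lemma IsExt.unique {P : PathGeometry} {α₀ : ↥P.H →ₗ[P.C] P.C} {α β : P.X →ₗ[P.C] P.C}
    (hα : P.IsExt α₀ α) (hβ : P.IsExt α₀ β) : α = β := by
  have hH : ∀ x ∈ P.H, α x = β x := fun x hx => (hα.1 ⟨x, hx⟩).trans (hβ.1 ⟨x, hx⟩).symm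
  rw [← sub_eq_zero]
  refine P.eq_zero_of_vanish _ (fun x hx => ?_) (fun ξ hξ η hη => ?_)
  · simp [hH x hx]
  · have h₁ := hα.2 ξ hξ η hη
    have h₂ := hβ.2 ξ hξ η hη
    simp only [VFCalc.dform] at h₁ h₂
    rw [hH ξ (P.E_le_H hξ), hH η (P.V_le_H hη)] at h₁
    rw [LinearMap.sub_apply]
    linear_combination h₂ - h₁

variable (α₀ : ↥P.H →ₗ[P.C] P.C)

/-- The graph of `α₀`, as a submodule of `TM × C`. -/
def graphH : Submodule P.C (P.X × P.C) := LinearMap.range (P.H.subtype.prod α₀)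

lemma mem_graphH {x : P.X} {c : P.C} : (x, c) ∈ P.graphH α₀ ↔ ∃ h : x ∈ P.H, α₀ ⟨x, h⟩ = c := by
  simp [graphH]

/-- The value `ξ · α₀(η) − η · α₀(ξ)` which an extension must take on `[ξ, η]`. -/
def bracketVal (ξ : ↥P.E) (η : ↥P.V) : P.C :=
  P.D ξ (α₀ ⟨η, P.V_le_H η.2⟩) - P.D η (α₀ ⟨ξ, P.E_le_H ξ.2⟩)

/-- The map `(ξ, η) ↦ ([ξ, η], ξ · α₀(η) − η · α₀(ξ))`, which is bilinear over the functions
modulo the graph of `α₀`. -/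
def bracketMap : ↥P.E →ₗ[P.C] ↥P.V →ₗ[P.C] (P.X × P.C) ⧸ P.graphH α₀ :=
  LinearMap.mk₂ P.C
    (fun ξ η => (P.graphH α₀).mkQ (P.lie (ξ : P.X) (η : P.X), P.bracketVal α₀ ξ η))
    (by
      intro ξ₁ ξ₂ η
      rw [← map_add]
      congr 1
      have hadd : ∀ h, α₀ ⟨(ξ₁ : P.X) + ξ₂, h⟩
          = α₀ ⟨ξ₁, P.E_le_H ξ₁.2⟩ + α₀ ⟨ξ₂, P.E_le_H ξ₂.2⟩ := by
        intro h; rw [← map_add]; rfl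
      ext
      · simp [P.lie_add_left]
      · simp only [bracketVal, hadd, P.D_add_right, Submodule.coe_add, P.D_add_left, Prod.snd_add]
        ring)
    (by
      intro f ξ η
      rw [← map_smul, ← sub_eq_zero, ← map_sub, Submodule.mkQ_apply,
        Submodule.Quotient.mk_eq_zero]
      have hsmul : ∀ h, α₀ ⟨f • (ξ : P.X), h⟩
          = f * α₀ ⟨ξ, P.E_le_H ξ.2⟩ := by
        intro h; rw [← smul_eq_mul, ← map_smul]; rfl
      -- the defect of tensoriality in `ξ` is `-(η · f) • (ξ, α₀ ξ)`
      have hmem := (P.graphH α₀).smul_mem (-P.D η f)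
        ((P.mem_graphH α₀).2 ⟨P.E_le_H ξ.2, rfl⟩)
      convert hmem using 1
      ext
      · simp only [Submodule.coe_smul, P.lie_smul_left, Prod.fst_sub, Prod.smul_fst]
        module
      · simp only [bracketVal, hsmul, P.D_mul_right, Submodule.coe_smul, P.D_smul_left,
          Prod.snd_sub, Prod.smul_snd, smul_eq_mul]
        ring)
    (by
      intro ξ η₁ η₂
      rw [← map_add]
      congr 1
      have hadd : ∀ h, α₀ ⟨(η₁ : P.X) + η₂, h⟩
          = α₀ ⟨η₁, P.V_le_H η₁.2⟩ + α₀ ⟨η₂, P.V_le_H η₂.2⟩ := by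
        intro h; rw [← map_add]; rfl
      ext
      · simp [P.lie_add_right]
      · simp only [bracketVal, hadd, P.D_add_right, Submodule.coe_add, P.D_add_left, Prod.snd_add]
        ring)
    (by
      intro f ξ η
      rw [← map_smul, ← sub_eq_zero, ← map_sub, Submodule.mkQ_apply,
        Submodule.Quotient.mk_eq_zero]
      have hsmul : ∀ h, α₀ ⟨f • (η : P.X), h⟩
          = f * α₀ ⟨η, P.V_le_H η.2⟩ := by
        intro h; rw [← smul_eq_mul, ← map_smul]; rfl
      -- the defect of tensoriality in `η` is `(ξ · f) • (η, α₀ η)`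
      have hmem := (P.graphH α₀).smul_mem (P.D ξ f)
        ((P.mem_graphH α₀).2 ⟨P.V_le_H η.2, rfl⟩)
      convert hmem using 1
      ext
      · simp only [Submodule.coe_smul, P.lie_smul_right, Prod.fst_sub, Prod.smul_fst]
        module
      · simp only [bracketVal, hsmul, P.D_mul_right, Submodule.coe_smul, P.D_smul_left,
          Prod.snd_sub, Prod.smul_snd, smul_eq_mul]
        ring)

/-- The linear map `σ : TM → (TM × C)/K`, with `K` the graph of `α₀`, which kills `H` and sends
`[ξ, η]` to the class of `([ξ, η], ξ · α₀(η) − η · α₀(ξ))`. -/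
def sigma : P.X →ₗ[P.C] (P.X × P.C) ⧸ P.graphH α₀ :=
  TensorProduct.lift (P.bracketMap α₀) ∘ₗ P.leviEquiv.symm.toLinearMap ∘ₗ P.H.mkQ

lemma sigma_of_mem {x : P.X} (hx : x ∈ P.H) : P.sigma α₀ x = 0 := by
  have h : P.H.mkQ x = 0 := by simpa using hx
  simp only [sigma, LinearMap.comp_apply, h, map_zero]

lemma sigma_lie (ξ : ↥P.E) (η : ↥P.V) :
    P.sigma α₀ (P.lie (ξ : P.X) (η : P.X))
      = (P.graphH α₀).mkQ (P.lie (ξ : P.X) (η : P.X), P.bracketVal α₀ ξ η) := by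
  simp only [sigma, LinearMap.comp_apply, ← P.leviEquiv_tmul ξ η]
  simp [bracketMap]

/-- The projection `(TM × C)/K → TM/H` induced by `(x, c) ↦ x`. -/
def graphProj : ((P.X × P.C) ⧸ P.graphH α₀) →ₗ[P.C] P.Q :=
  (P.graphH α₀).liftQ (P.H.mkQ ∘ₗ LinearMap.fst P.C P.X P.C) (by
    rintro ⟨x, c⟩ hx
    obtain ⟨h, -⟩ := (P.mem_graphH α₀).1 hx
    simpa using h)

lemma graphProj_sigma (x : P.X) : P.graphProj α₀ (P.sigma α₀ x) = P.H.mkQ x := by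
  have h : P.graphProj α₀ ∘ₗ TensorProduct.lift (P.bracketMap α₀)
      = P.leviEquiv.toLinearMap := by
    apply TensorProduct.ext'
    intro ξ η
    simp [bracketMap, graphProj, leviEquiv_tmul]
  have h' := LinearMap.congr_fun h (P.leviEquiv.symm (P.H.mkQ x))
  simpa [sigma] using h'

lemma exists_sigma_eq (x : P.X) : ∃ c : P.C, P.sigma α₀ x = (P.graphH α₀).mkQ (x, c) := by
  obtain ⟨⟨y, c⟩, hy⟩ := (P.graphH α₀).mkQ_surjective (P.sigma α₀ x)
  have hq := P.graphProj_sigma α₀ x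
  rw [← hy] at hq
  have hmem : y - x ∈ P.H := (Submodule.Quotient.eq P.H).1 (by simpa [graphProj] using hq)
  -- subtract the graph element `(y - x, α₀ (y - x))` from the representative `(y, c)`
  refine ⟨c - α₀ ⟨y - x, hmem⟩, ?_⟩
  rw [← hy]
  refine (Submodule.Quotient.eq _).2 ?_
  rw [Prod.mk_sub_mk]
  exact (P.mem_graphH α₀).2 ⟨hmem, by ring⟩

lemma mk_graphH_inj {x : P.X} {c d : P.C}
    (h : (P.graphH α₀).mkQ (x, c) = (P.graphH α₀).mkQ (x, d)) : c = d := by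
  have h' := (Submodule.Quotient.eq _).1 h
  rw [Prod.mk_sub_mk, sub_self] at h'
  obtain ⟨h0, h1⟩ := (P.mem_graphH α₀).1 h'
  have hz : α₀ ⟨0, h0⟩ = 0 := map_zero α₀
  rw [hz] at h1
  exact sub_eq_zero.1 h1.symm

lemma exists_isExt : ∃ α : P.X →ₗ[P.C] P.C, P.IsExt α₀ α := by
  choose a ha using P.exists_sigma_eq α₀
  let α : P.X →ₗ[P.C] P.C :=
    { toFun := a
      map_add' := fun x y => P.mk_graphH_inj α₀ (x := x + y) (by
        rw [← ha, map_add, ha x, ha y, ← map_add, Prod.mk_add_mk])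
      map_smul' := fun f x => P.mk_graphH_inj α₀ (x := f • x) (by
        rw [← ha, map_smul, ha x, ← map_smul, Prod.smul_mk, RingHom.id_apply]) }
  have hH : ∀ ψ : ↥P.H, α (ψ : P.X) = α₀ ψ := by
    intro ψ
    apply P.mk_graphH_inj α₀ (x := (ψ : P.X))
    refine (ha ψ).symm.trans ((P.sigma_of_mem α₀ ψ.2).trans ?_)
    symm
    exact (Submodule.Quotient.mk_eq_zero _).2 ((P.mem_graphH α₀).2 ⟨ψ.2, rfl⟩)
  refine ⟨α, hH, fun ξ hξ η hη => ?_⟩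
  have hb : α (P.lie ξ η) = P.bracketVal α₀ ⟨ξ, hξ⟩ ⟨η, hη⟩ :=
    P.mk_graphH_inj α₀ ((ha _).symm.trans (P.sigma_lie α₀ ⟨ξ, hξ⟩ ⟨η, hη⟩))
  rw [VFCalc.dform, hb, bracketVal, hH ⟨ξ, P.E_le_H hξ⟩, hH ⟨η, P.V_le_H hη⟩, sub_self]

lemma IsExt.add {P : PathGeometry} {a b : ↥P.H →ₗ[P.C] P.C} {α β : P.X →ₗ[P.C] P.C}
    (hα : P.IsExt a α) (hβ : P.IsExt b β) : P.IsExt (a + b) (α + β) := by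
  refine ⟨fun ψ => ?_, fun ξ hξ η hη => ?_⟩
  · rw [LinearMap.add_apply, LinearMap.add_apply, hα.1, hβ.1]
  · rw [P.dform_add, hα.2 ξ hξ η hη, hβ.2 ξ hξ η hη, add_zero]

lemma IsExt.algebraMap_smul {P : PathGeometry} {a : ↥P.H →ₗ[P.C] P.C} {α : P.X →ₗ[P.C] P.C}
    (hα : P.IsExt a α) (r : ℝ) :
    P.IsExt (algebraMap ℝ P.C r • a) (algebraMap ℝ P.C r • α) := by
  refine ⟨fun ψ => ?_, fun ξ hξ η hη => ?_⟩
  · rw [LinearMap.smul_apply, LinearMap.smul_apply, hα.1]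
  · rw [P.dform_algebraMap_smul, hα.2 ξ hξ η hη, mul_zero]

end PathGeometry

/-- Proposition 3.1 (1) of the paper.  Let `(M,E,V)` be a path
geometry and `α₀ ∈ Γ(H*)` a smooth section (modelled as a `C`-linear map `H → C`).
Then there is a unique one-form `α ∈ Ω¹(M)` with `α|_H = α₀` and `dα|_{E×V} = 0`.
Mapping `α₀` to `α` defines a linear first order differential operator
`L : Γ(H*) → Ω¹(M)`; in particular any map `L` satisfying the pointwise
characterization is additive and `ℝ`-linear. -/
theorem extension_L_existsUnique (P : PathGeometry) :
    (∀ α₀ : ↥P.H →ₗ[P.C] P.C, ∃! α : P.X →ₗ[P.C] P.C,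
      (∀ ψ : ↥P.H, α (ψ : P.X) = α₀ ψ) ∧
      (∀ ξ ∈ P.E, ∀ η ∈ P.V, P.dform α ξ η = 0)) ∧
    ∀ L : (↥P.H →ₗ[P.C] P.C) → (P.X →ₗ[P.C] P.C),
      (∀ α₀ : ↥P.H →ₗ[P.C] P.C,
        (∀ ψ : ↥P.H, (L α₀) (ψ : P.X) = α₀ ψ) ∧
        (∀ ξ ∈ P.E, ∀ η ∈ P.V, P.dform (L α₀) ξ η = 0)) →
      (∀ a b : ↥P.H →ₗ[P.C] P.C, L (a + b) = L a + L b) ∧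
      (∀ (r : ℝ) (a : ↥P.H →ₗ[P.C] P.C),
        L (algebraMap ℝ P.C r • a) = algebraMap ℝ P.C r • L a) := by
  refine ⟨fun α₀ => ?_, fun L hL => ?_⟩
  · obtain ⟨α, hα⟩ := P.exists_isExt α₀
    exact ⟨α, hα, fun β hβ => PathGeometry.IsExt.unique hβ hα⟩
  · have hL' : ∀ α₀, P.IsExt α₀ (L α₀) := hL
    exact ⟨fun a b => (hL' (a + b)).unique ((hL' a).add (hL' b)),
      fun r a => (hL' _).unique ((hL' a).algebraMap_smul r)⟩
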